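/- Let J be a finite nonempty index set and let n : J → ℕ be observation counts with total N = ∑_{j ∈ J} n_j > 0. Over all probability vectors p : J → ℝ (i.e., p_j ≥ 0 for all j and ∑_{j ∈ J} p_j = 1), the multinomial likelihood L(p) = ∏_{j ∈ J} p_j^{n_j} (with the convention 0^0 = 1) attains its maximum at the empirical frequency vector p̂ given by p̂_j = n_j / N; that is, for every probability vector p, ∏_{j ∈ J} p_j^{n_j} ≤ ∏_{j ∈ J} (n_j / N)^{n_j}. -/

import Mathlib

/-!
For a fixed weight `w ≥ 0`, the tangent line bound `t ≤ exp (t - 1)` at `t = x / w` gives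
`x ^ w ≤ w ^ w * exp (x - w)`. Multiplying over all states, the exponential factors combine into
`exp (∑ x - ∑ w)`, which is at most `1` as soon as `∑ x ≤ ∑ w`: this is Gibbs' inequality, in a form
where neither family is normalized. It is applied to the expected counts `N * p j`, and dividing by
`N ^ N` returns to frequencies.
-/

theorem rpow_le_rpow_self_mul_exp_sub {x w : ℝ} (hx : 0 ≤ x) (hw : 0 ≤ w) :
    x ^ w ≤ w ^ w * Real.exp (x - w) := by
  rcases hw.eq_or_lt with rfl | hw_pos
  · simpa using hx
  have tangent : x / w ≤ Real.exp (x / w - 1) := by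
    simpa using Real.add_one_le_exp (x / w - 1)
  calc
    x ^ w = (w * (x / w)) ^ w := by rw [mul_div_cancel₀ x hw_pos.ne']
    _ ≤ (w * Real.exp (x / w - 1)) ^ w := by gcongr
    _ = w ^ w * Real.exp ((x / w - 1) * w) := by
      rw [Real.mul_rpow hw (Real.exp_nonneg _), Real.exp_mul]
    _ = w ^ w * Real.exp (x - w) := by rw [sub_one_mul, div_mul_cancel₀ x hw_pos.ne']

section

variable {ι : Type*} {s : Finset ι}

theorem prod_rpow_le_prod_rpow_self_of_sum_le {x w : ι → ℝ} (hx : ∀ i ∈ s, 0 ≤ x i)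
    (hw : ∀ i ∈ s, 0 ≤ w i) (hsum : ∑ i ∈ s, x i ≤ ∑ i ∈ s, w i) :
    ∏ i ∈ s, x i ^ w i ≤ ∏ i ∈ s, w i ^ w i := by
  have exp_le_one : Real.exp (∑ i ∈ s, x i - ∑ i ∈ s, w i) ≤ 1 :=
    Real.exp_le_one_iff.mpr (sub_nonpos.mpr hsum)
  calc
    ∏ i ∈ s, x i ^ w i ≤ ∏ i ∈ s, w i ^ w i * Real.exp (x i - w i) :=
      Finset.prod_le_prod (fun i hi => Real.rpow_nonneg (hx i hi) _)
        fun i hi => rpow_le_rpow_self_mul_exp_sub (hx i hi) (hw i hi)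
    _ = (∏ i ∈ s, w i ^ w i) * Real.exp (∑ i ∈ s, x i - ∑ i ∈ s, w i) := by
      rw [Finset.prod_mul_distrib, ← Real.exp_sum, Finset.sum_sub_distrib]
    _ ≤ ∏ i ∈ s, w i ^ w i :=
      mul_le_of_le_one_right
        (Finset.prod_nonneg fun i hi => Real.rpow_nonneg (hw i hi) _) exp_le_one

theorem prod_div_const_rpow {x w : ι → ℝ} {c : ℝ} (hx : ∀ i ∈ s, 0 ≤ x i) (hc : 0 ≤ c) :
    ∏ i ∈ s, (x i / c) ^ w i = (∏ i ∈ s, x i ^ w i) / ∏ i ∈ s, c ^ w i := by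
  rw [← Finset.prod_div_distrib]
  exact Finset.prod_congr rfl fun i hi => Real.div_rpow (hx i hi) hc _

theorem multinomial_mle_general {w p : ι → ℝ} (hw : ∀ i ∈ s, 0 ≤ w i)
    (hw_sum : 0 < ∑ i ∈ s, w i) (hp : ∀ i ∈ s, 0 ≤ p i) (hp_sum : ∑ i ∈ s, p i ≤ 1) :
    ∏ i ∈ s, p i ^ w i ≤ ∏ i ∈ s, (w i / ∑ l ∈ s, w l) ^ w i := by
  set W := ∑ l ∈ s, w l
  have expected_nonneg : ∀ i ∈ s, 0 ≤ W * p i := fun i hi => mul_nonneg hw_sum.le (hp i hi)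
  have expected_sum_le : ∑ i ∈ s, W * p i ≤ W := by
    rw [← Finset.mul_sum]
    exact mul_le_of_le_one_right hw_sum.le hp_sum
  calc
    ∏ i ∈ s, p i ^ w i = ∏ i ∈ s, (W * p i / W) ^ w i := by
      simp only [mul_div_cancel_left₀ _ hw_sum.ne']
    _ = (∏ i ∈ s, (W * p i) ^ w i) / ∏ i ∈ s, W ^ w i :=
      prod_div_const_rpow expected_nonneg hw_sum.le
    _ ≤ (∏ i ∈ s, w i ^ w i) / ∏ i ∈ s, W ^ w i := by
      gcongr ?_ / _
      exact prod_rpow_le_prod_rpow_self_of_sum_le expected_nonneg hw expected_sum_le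
    _ = ∏ i ∈ s, (w i / W) ^ w i := (prod_div_const_rpow hw hw_sum.le).symm

end

/-- The empirical frequency vector `p̂ j = n j / N` maximizes the multinomial
likelihood `∏ j, p j ^ n j` over all probability vectors `p`. -/
theorem multinomial_mle {J : Type*} [Fintype J] [Nonempty J]
    (n : J → ℕ) (hN : 0 < ∑ j, n j)
    (p : J → ℝ) (hp : ∀ j, 0 ≤ p j) (hpsum : ∑ j, p j = 1) :
    ∏ j, p j ^ n j ≤ ∏ j, ((n j : ℝ) / ((∑ l, n l : ℕ) : ℝ)) ^ n j := by
  simpa only [Real.rpow_natCast, Nat.cast_sum] using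
    multinomial_mle_general (w := fun j => (n j : ℝ)) (fun j _ => (n j).cast_nonneg)
      (mod_cast hN) (fun j _ => hp j) hpsum.le
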